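/- Under the same hypotheses, the first-order heat flux is Q^(1)_α := (1/2)∫ |ξ|² ξ_α f^(1) dξ = −κ ∂_α T − u_β σ_{αβ}, with κ = τp(D+2)R₀/2 and σ_{αβ} = μ(∂_α u_β + ∂_β u_α − (2/D)(∇·u)δ_{αβ}), μ = τp. In particular the resulting Navier–Stokes system has Prandtl number μ c_p/κ = 1, where c_p = (D+2)R₀/2. -/

import Mathlib

/-!
Differentiating the logarithm of the Maxwellian and eliminating `∂ₜρ`, `∂ₜu`, `∂ₜT` by the Euler
equations in primitive form (`euler_primitive`) gives, in the peculiar velocity `c = ξ - u` and with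
`θ = R₀T`,
`f⁽¹⁾ = -τ f⁽ᵉᑫ⁾ ((|c|²/(2θ) - (D+2)/2) c·∇T/T + (1/θ) (cᵢcⱼ ∂ᵢuⱼ - (∇·u) |c|²/D))`,
the velocity gradient entering only through its traceless part
(`log_transport_eq`, `transport_maxwellian_eq`). After the translation `ξ = c + u`, the heat flux is
a moment of the centred Gaussian `exp (-|c|²/(2θ))` against an explicit polynomial in `c`.

Gaussian moments of polynomials are computed algebraically from Stein's identity
`∫ cᵢ p = θ ∫ ∂ᵢp` (`gaussMoment_X_mul`). Combined with Euler's identity for homogeneous polynomials,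
it removes factors `|c|²` (`gaussMoment_normSq_mul`) and makes moments of odd degree vanish
(`gaussMoment_odd`). Only the terms of degree 2, 4 and 6 of the integrand remain: the coefficient
of `∇T` yields `κ`, and the fourth moment `∫ c_α (u·c) (cᵢcⱼ ∂ᵢuⱼ)` yields the viscous work `u·σ`
(`gaussMoment_fluxPoly_mul_cePoly`).
-/

open MeasureTheory Real

/-- The `D`-dimensional Maxwellian distribution. -/
noncomputable def maxwellian (D : ℕ) (ρ R₀ T : ℝ) (u : EuclideanSpace ℝ (Fin D))
    (ξ : EuclideanSpace ℝ (Fin D)) : ℝ :=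
  ρ / (2 * π * R₀ * T) ^ ((D : ℝ) / 2) * exp (-‖ξ - u‖ ^ 2 / (2 * R₀ * T))

/-! ### Gaussian moments of polynomials -/

open MvPolynomial in
lemma integrable_eval_mul_gaussian {D : ℕ} {b : ℝ} (hb : 0 < b) (p : MvPolynomial (Fin D) ℝ) :
    Integrable (fun c : EuclideanSpace ℝ (Fin D) => eval c.ofLp p * exp (-b * ‖c‖ ^ 2)) := by
  induction p using MvPolynomial.induction_on' with
  | monomial s a =>
    have h1 : ∀ i : Fin D, Integrable (fun x : ℝ => x ^ s i * exp (-b * x ^ 2)) := fun i => by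
      simpa using integrable_rpow_mul_exp_neg_mul_sq hb
        (s := (s i : ℝ)) (by have := Nat.cast_nonneg (α := ℝ) (s i); linarith)
    have h2 := ((Integrable.fintype_prod h1).const_mul a)
    rw [← volume_pi] at h2
    have h3 := (PiLp.volume_preserving_ofLp (Fin D)).integrable_comp_of_integrable h2
    refine h3.congr (Filter.Eventually.of_forall fun c => ?_)
    simp only [Function.comp_apply, eval_monomial, Finset.prod_mul_distrib, ← exp_sum,
      ← Finset.mul_sum, EuclideanSpace.real_norm_sq_eq]
    rw [Finsupp.prod_fintype _ _ (fun i => pow_zero _)]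
    ring
  | add p q hp hq =>
    simp only [map_add, add_mul]
    exact hp.add hq

/-- The unnormalised moment functional `p ↦ ∫ p(c) exp (-‖c‖² / (2θ)) dc` of the centred Gaussian
weight of variance `θ`, as a linear functional on polynomials in the components of `c`. -/
noncomputable def gaussMoment (D : ℕ) {θ : ℝ} (hθ : 0 < θ) : MvPolynomial (Fin D) ℝ →ₗ[ℝ] ℝ where
  toFun p := ∫ c : EuclideanSpace ℝ (Fin D),
    MvPolynomial.eval c.ofLp p * exp (-(1 / (2 * θ)) * ‖c‖ ^ 2)
  map_add' p q := by
    simp only [map_add, add_mul]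
    exact integral_add (integrable_eval_mul_gaussian (by positivity) p)
      (integrable_eval_mul_gaussian (by positivity) q)
  map_smul' r p := by
    simp only [MvPolynomial.smul_eval, mul_assoc, integral_const_mul, RingHom.id_apply, smul_eq_mul]

open MvPolynomial in
lemma hasLineDerivAt_eval {D : ℕ} (p : MvPolynomial (Fin D) ℝ) (i : Fin D)
    (c : EuclideanSpace ℝ (Fin D)) :
    HasLineDerivAt ℝ (fun c : EuclideanSpace ℝ (Fin D) => eval c.ofLp p)
      (eval c.ofLp (pderiv i p)) c (EuclideanSpace.single i 1) := by
  unfold HasLineDerivAt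
  induction p using MvPolynomial.induction_on with
  | C a => simpa using hasDerivAt_const (0 : ℝ) a
  | add p q hp hq => simpa [Pi.add_def] using hp.add hq
  | mul_X p j hp =>
    have hX : HasDerivAt
        (fun t : ℝ => (c + t • EuclideanSpace.single i (1 : ℝ) : EuclideanSpace ℝ (Fin D)) j)
        ((EuclideanSpace.single i (1 : ℝ) : EuclideanSpace ℝ (Fin D)) j) 0 := by
      simpa using ((hasDerivAt_id (0 : ℝ)).mul_const
        ((EuclideanSpace.single i (1 : ℝ) : EuclideanSpace ℝ (Fin D)) j)).const_add (c j)
    have h := hp.mul hX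
    simp only [map_mul, eval_X, Derivation.leibniz, pderiv_X, map_add, smul_eq_mul]
    refine h.congr_deriv ?_
    by_cases hij : i = j
    · subst hij; simp; ring
    · simp [Ne.symm hij]; ring

/-- Gaussian integration by parts (Stein's identity). -/
lemma gaussMoment_X_mul {D : ℕ} {θ : ℝ} (hθ : 0 < θ) (i : Fin D) (p : MvPolynomial (Fin D) ℝ) :
    gaussMoment D hθ (MvPolynomial.X i * p) = θ * gaussMoment D hθ (MvPolynomial.pderiv i p) := by
  have hb : 0 < 1 / (2 * θ) := by positivity
  have hg : ∀ c : EuclideanSpace ℝ (Fin D),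
      HasLineDerivAt ℝ (fun c : EuclideanSpace ℝ (Fin D) => exp (-(1 / (2 * θ)) * ‖c‖ ^ 2))
        (-(1 / θ) * (c i * exp (-(1 / (2 * θ)) * ‖c‖ ^ 2))) c (EuclideanSpace.single i 1) := by
    intro c
    have h1 := ((hasStrictFDerivAt_norm_sq c).hasFDerivAt.const_mul (-(1 / (2 * θ)))).exp
    have e : (exp (-(1 / (2 * θ)) * ‖c‖ ^ 2) • -(1 / (2 * θ)) • 2 • (innerSL ℝ) c)
        (EuclideanSpace.single i 1) = -(1 / θ) * (c i * exp (-(1 / (2 * θ)) * ‖c‖ ^ 2)) := by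
      simp
      field_simp
      simp [EuclideanSpace.inner_single_right]
    rw [← e]
    exact h1.hasLineDerivAt (EuclideanSpace.single i 1)
  have hXp := integrable_eval_mul_gaussian hb (MvPolynomial.X i * p)
  have key := integral_bilinear_hasLineDerivAt_right_eq_neg_left_of_integrable
    (μ := (volume : Measure (EuclideanSpace ℝ (Fin D)))) (B := ContinuousLinearMap.mul ℝ ℝ)
    (v := EuclideanSpace.single i 1)
    (f := fun c : EuclideanSpace ℝ (Fin D) => MvPolynomial.eval c.ofLp p)
    (f' := fun c => MvPolynomial.eval c.ofLp (MvPolynomial.pderiv i p))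
    (g := fun c => exp (-(1 / (2 * θ)) * ‖c‖ ^ 2))
    (g' := fun c => -(1 / θ) * (c i * exp (-(1 / (2 * θ)) * ‖c‖ ^ 2)))
    (integrable_eval_mul_gaussian hb _)
    ((hXp.const_mul (-(1 / θ))).congr (Filter.Eventually.of_forall fun c => by simp; ring))
    (integrable_eval_mul_gaussian hb _)
    (fun c _ => hasLineDerivAt_eval p i c) (fun c _ => hg c)
  have h2 : ∫ c : EuclideanSpace ℝ (Fin D), (ContinuousLinearMap.mul ℝ ℝ)
      (MvPolynomial.eval c.ofLp p) (-(1 / θ) * (c i * exp (-(1 / (2 * θ)) * ‖c‖ ^ 2)))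
      = -(1 / θ) * gaussMoment D hθ (MvPolynomial.X i * p) := by
    change _ = -(1 / θ) * ∫ c : EuclideanSpace ℝ (Fin D), _
    rw [← integral_const_mul]
    congr 1; ext c; simp; ring
  have h3 : ∫ c : EuclideanSpace ℝ (Fin D), (ContinuousLinearMap.mul ℝ ℝ)
      (MvPolynomial.eval c.ofLp (MvPolynomial.pderiv i p)) (exp (-(1 / (2 * θ)) * ‖c‖ ^ 2))
      = gaussMoment D hθ (MvPolynomial.pderiv i p) := rfl
  rw [h2, h3] at key
  field_simp at key
  linarith

lemma gaussMoment_C_mul {D : ℕ} {θ : ℝ} (hθ : 0 < θ) (r : ℝ) (p : MvPolynomial (Fin D) ℝ) :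
    gaussMoment D hθ (MvPolynomial.C r * p) = r * gaussMoment D hθ p := by
  rw [← MvPolynomial.smul_eq_C_mul, map_smul, smul_eq_mul]

/-- The normalisation of the Maxwellian. -/
lemma gaussMoment_one {D : ℕ} {θ : ℝ} (hθ : 0 < θ) :
    gaussMoment D hθ 1 = (2 * π * θ) ^ ((D : ℝ) / 2) := by
  have h := GaussianFourier.integral_rexp_neg_mul_sq_norm (V := EuclideanSpace ℝ (Fin D))
    (b := 1 / (2 * θ)) (by positivity)
  simp only [finrank_euclideanSpace, Fintype.card_fin] at h
  change ∫ c : EuclideanSpace ℝ (Fin D), MvPolynomial.eval c.ofLp 1 *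
    exp (-(1 / (2 * θ)) * ‖c‖ ^ 2) = _
  simp only [map_one, one_mul, h]
  congr 1
  field_simp

/-- The polynomial `|c|²`. -/
noncomputable def normSqPoly (D : ℕ) : MvPolynomial (Fin D) ℝ := ∑ i, MvPolynomial.X i ^ 2

/-- The linear form `a · c`. -/
noncomputable def linPoly {D : ℕ} (a : Fin D → ℝ) : MvPolynomial (Fin D) ℝ :=
  ∑ i, MvPolynomial.C (a i) * MvPolynomial.X i

/-- The quadratic form `∑ B i j cᵢ cⱼ`. -/
noncomputable def quadPoly {D : ℕ} (B : Fin D → Fin D → ℝ) : MvPolynomial (Fin D) ℝ :=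
  ∑ i, ∑ j, MvPolynomial.C (B i j) * (MvPolynomial.X i * MvPolynomial.X j)

lemma isHomogeneous_normSqPoly (D : ℕ) : (normSqPoly D).IsHomogeneous 2 :=
  MvPolynomial.IsHomogeneous.sum _ _ _ fun i _ => by
    simpa using (MvPolynomial.isHomogeneous_X ℝ i).pow 2

lemma isHomogeneous_linPoly {D : ℕ} (a : Fin D → ℝ) : (linPoly a).IsHomogeneous 1 :=
  MvPolynomial.IsHomogeneous.sum _ _ _ fun i _ => (MvPolynomial.isHomogeneous_X ℝ i).C_mul _

lemma isHomogeneous_quadPoly {D : ℕ} (B : Fin D → Fin D → ℝ) : (quadPoly B).IsHomogeneous 2 :=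
  MvPolynomial.IsHomogeneous.sum _ _ _ fun i _ => MvPolynomial.IsHomogeneous.sum _ _ _ fun j _ =>
    ((MvPolynomial.isHomogeneous_X ℝ i).mul (MvPolynomial.isHomogeneous_X ℝ j)).C_mul _

/-- On homogeneous polynomials, a factor `|c|²` integrates out: this is Stein's identity summed
over the coordinates together with Euler's identity `∑ cᵢ ∂ᵢp = n p`. -/
lemma gaussMoment_normSq_mul {D : ℕ} {θ : ℝ} (hθ : 0 < θ) {n : ℕ} {p : MvPolynomial (Fin D) ℝ}
    (hp : p.IsHomogeneous n) :
    gaussMoment D hθ (normSqPoly D * p) = θ * (D + n) * gaussMoment D hθ p := by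
  have h : ∀ i : Fin D, gaussMoment D hθ (MvPolynomial.X i ^ 2 * p) =
      θ * gaussMoment D hθ p + θ * gaussMoment D hθ (MvPolynomial.X i * MvPolynomial.pderiv i p) := by
    intro i
    rw [pow_two, mul_assoc, gaussMoment_X_mul, MvPolynomial.pderiv_mul, MvPolynomial.pderiv_X_self,
      one_mul, map_add, mul_add]
  have hE := congrArg (gaussMoment D hθ) hp.sum_X_mul_pderiv
  rw [map_sum, map_nsmul, nsmul_eq_mul] at hE
  rw [normSqPoly, Finset.sum_mul, map_sum, Finset.sum_congr rfl fun i _ => h i,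
    Finset.sum_add_distrib, ← Finset.mul_sum Finset.univ (fun i => gaussMoment D hθ
      (MvPolynomial.X i * MvPolynomial.pderiv i p)), hE, Finset.sum_const, Finset.card_univ,
    Fintype.card_fin, nsmul_eq_mul]
  ring

/-- Moments of odd degree vanish: Stein's and Euler's identities express a moment of degree `n`
through moments of degree `n - 2`. -/
lemma gaussMoment_odd {D : ℕ} {θ : ℝ} (hθ : 0 < θ) (k : ℕ) {p : MvPolynomial (Fin D) ℝ}
    (hp : p.IsHomogeneous (2 * k + 1)) : gaussMoment D hθ p = 0 := by
  induction k generalizing p with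
  | zero =>
    have h := congrArg (gaussMoment D hθ) hp.sum_X_mul_pderiv
    simp only [map_sum, gaussMoment_X_mul] at h
    rw [Finset.sum_eq_zero] at h
    · simpa using h.symm
    · intro i _
      have h0 := (MvPolynomial.totalDegree_eq_zero_iff_eq_C).1
        ((MvPolynomial.totalDegree_zero_iff_isHomogeneous _).2 (hp.pderiv (i := i)))
      rw [h0, MvPolynomial.pderiv_C]; simp
  | succ k ih =>
    have h := congrArg (gaussMoment D hθ) hp.sum_X_mul_pderiv
    simp only [map_sum, gaussMoment_X_mul] at h
    rw [Finset.sum_eq_zero] at h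
    · rw [map_nsmul, nsmul_eq_mul] at h
      have : ((2 * (k + 1) + 1 : ℕ) : ℝ) ≠ 0 := by positivity
      exact (mul_eq_zero.1 h.symm).resolve_left this
    · intro i _
      rw [ih ((hp.pderiv (i := i)).pderiv (i := i)), mul_zero]

lemma pderiv_linPoly {D : ℕ} (a : Fin D → ℝ) (i : Fin D) :
    MvPolynomial.pderiv i (linPoly a) = MvPolynomial.C (a i) := by
  simp [linPoly, MvPolynomial.pderiv_X, Pi.single_apply]

lemma pderiv_quadPoly {D : ℕ} (B : Fin D → Fin D → ℝ) (i : Fin D) :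
    MvPolynomial.pderiv i (quadPoly B) = linPoly (fun j => B i j + B j i) := by
  have h : ∀ j k : Fin D, MvPolynomial.pderiv i (MvPolynomial.C (B j k) *
      (MvPolynomial.X j * MvPolynomial.X k) : MvPolynomial (Fin D) ℝ) =
      (if j = i then MvPolynomial.C (B j k) * MvPolynomial.X k else 0) +
        (if k = i then MvPolynomial.C (B j k) * MvPolynomial.X j else 0) := by
    intro j k
    rw [MvPolynomial.pderiv_C_mul, MvPolynomial.pderiv_mul, MvPolynomial.pderiv_X,
      MvPolynomial.pderiv_X]
    simp only [Pi.single_apply]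
    split_ifs <;> ring
  simp only [quadPoly, linPoly, map_sum, h, Finset.sum_add_distrib, map_add, add_mul]
  congr 1
  · rw [Finset.sum_comm]; simp
  · simp

lemma gaussMoment_X_mul_linPoly {D : ℕ} {θ : ℝ} (hθ : 0 < θ) (i : Fin D) (a : Fin D → ℝ) :
    gaussMoment D hθ (MvPolynomial.X i * linPoly a) = θ * a i * gaussMoment D hθ 1 := by
  rw [gaussMoment_X_mul, pderiv_linPoly, ← mul_one (MvPolynomial.C (a i)), gaussMoment_C_mul]
  ring

lemma gaussMoment_linPoly_mul_linPoly {D : ℕ} {θ : ℝ} (hθ : 0 < θ) (a b : Fin D → ℝ) :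
    gaussMoment D hθ (linPoly a * linPoly b) = θ * (∑ i, a i * b i) * gaussMoment D hθ 1 := by
  rw [linPoly, Finset.sum_mul, map_sum, Finset.mul_sum, Finset.sum_mul]
  refine Finset.sum_congr rfl fun i _ => ?_
  rw [mul_assoc, gaussMoment_C_mul, gaussMoment_X_mul_linPoly]
  ring

lemma gaussMoment_quadPoly {D : ℕ} {θ : ℝ} (hθ : 0 < θ) (B : Fin D → Fin D → ℝ) :
    gaussMoment D hθ (quadPoly B) = θ * (∑ i, B i i) * gaussMoment D hθ 1 := by
  rw [quadPoly, map_sum, Finset.mul_sum, Finset.sum_mul]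
  refine Finset.sum_congr rfl fun i _ => ?_
  rw [map_sum, Finset.sum_eq_single i]
  · rw [gaussMoment_C_mul, gaussMoment_X_mul, MvPolynomial.pderiv_X_self]; ring
  · intro j _ hj
    rw [gaussMoment_C_mul, gaussMoment_X_mul, MvPolynomial.pderiv_X_of_ne hj]; simp
  · simp

lemma gaussMoment_normSqPoly {D : ℕ} {θ : ℝ} (hθ : 0 < θ) :
    gaussMoment D hθ (normSqPoly D) = θ * D * gaussMoment D hθ 1 := by
  simpa using gaussMoment_normSq_mul hθ (MvPolynomial.isHomogeneous_one (Fin D) ℝ)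

/-- The fourth moment `∫ c_α (u·c) (∑ B i j cᵢ cⱼ)`, the only one that sees the off-diagonal part
of `B`. -/
lemma gaussMoment_X_mul_linPoly_mul_quadPoly {D : ℕ} {θ : ℝ} (hθ : 0 < θ) (α : Fin D)
    (u : Fin D → ℝ) (B : Fin D → Fin D → ℝ) :
    gaussMoment D hθ (MvPolynomial.X α * (linPoly u * quadPoly B)) =
      θ ^ 2 * (u α * (∑ i, B i i) + ∑ j, u j * (B α j + B j α)) * gaussMoment D hθ 1 := by
  rw [gaussMoment_X_mul, MvPolynomial.pderiv_mul, pderiv_linPoly, pderiv_quadPoly, map_add,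
    gaussMoment_C_mul, gaussMoment_quadPoly, gaussMoment_linPoly_mul_linPoly]
  ring

/-! ### The moment giving the heat flux -/

/-- The polynomial `(|c|²/(2θ) - (D+2)/2) a·c + (1/θ) (∑ B i j cᵢ cⱼ - (tr B / D) |c|²)`
multiplying the Maxwellian in the first-order Chapman–Enskog correction, with `a = ∇T / T`,
`B i j = ∂ᵢ uⱼ`. -/
noncomputable def cePoly {D : ℕ} (θ : ℝ) (a : Fin D → ℝ) (B : Fin D → Fin D → ℝ) :
    MvPolynomial (Fin D) ℝ :=
  (MvPolynomial.C (1 / (2 * θ)) * normSqPoly D - MvPolynomial.C (((D : ℝ) + 2) / 2)) * linPoly a +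
    MvPolynomial.C (1 / θ) *
      (quadPoly B - MvPolynomial.C ((∑ i, B i i) / D) * normSqPoly D)

/-- The polynomial `|c + u|² (c_α + u_α)`. -/
noncomputable def fluxPoly {D : ℕ} (u : Fin D → ℝ) (α : Fin D) : MvPolynomial (Fin D) ℝ :=
  (normSqPoly D + MvPolynomial.C 2 * linPoly u + MvPolynomial.C (∑ i, u i ^ 2)) *
    (MvPolynomial.X α + MvPolynomial.C (u α))

open MvPolynomial in
/-- The moment behind the heat flux: the product is expanded into homogeneous pieces, those of odd
degree integrate to zero, and the contributions of `u α * ∑ i, B i i` combine into the trace part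
of the viscous stress. -/
lemma gaussMoment_fluxPoly_mul_cePoly {D : ℕ} (hD : 1 ≤ D) {θ : ℝ} (hθ : 0 < θ) (α : Fin D)
    (u a : Fin D → ℝ) (B : Fin D → Fin D → ℝ) :
    gaussMoment D hθ (fluxPoly u α * cePoly θ a B) =
      ((D + 2) * θ ^ 2 * a α + 2 * θ * (∑ j, u j * (B α j + B j α)
        - 2 / D * (∑ i, B i i) * u α)) * gaussMoment D hθ 1 := by
  set Q := normSqPoly D
  set A := linPoly a
  set U := linPoly u
  set S := quadPoly B
  set dv := ∑ i, B i i
  set usq := ∑ i, u i ^ 2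
  set L := gaussMoment D hθ
  have hQh : Q.IsHomogeneous 2 := isHomogeneous_normSqPoly D
  have hAh : A.IsHomogeneous 1 := isHomogeneous_linPoly a
  have hUh : U.IsHomogeneous 1 := isHomogeneous_linPoly u
  have hSh : S.IsHomogeneous 2 := isHomogeneous_quadPoly B
  have hXh := isHomogeneous_X ℝ α
  have expand : fluxPoly u α * cePoly θ a B =
      C (1 / (2 * θ)) * (Q * (Q * (X α * A))) + C (u α * (1 / (2 * θ))) * (Q * (Q * A))
      + C (2 * (1 / (2 * θ))) * (U * Q * X α * A) + C (2 * u α * (1 / (2 * θ))) * (Q * (U * A))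
      + C (usq * (1 / (2 * θ))) * (Q * (X α * A)) + C (usq * u α * (1 / (2 * θ))) * (Q * A)
      - C (((D : ℝ) + 2) / 2) * (Q * (X α * A)) - C (((D : ℝ) + 2) / 2 * u α) * (Q * A)
      - C (((D : ℝ) + 2) / 2 * 2) * (U * X α * A) - C (((D : ℝ) + 2) / 2 * 2 * u α) * (U * A)
      - C (((D : ℝ) + 2) / 2 * usq) * (X α * A) - C (((D : ℝ) + 2) / 2 * usq * u α) * A
      + C (1 / θ) * (Q * X α * S) + C (1 / θ * u α) * (Q * S)
      + C (1 / θ * 2) * (X α * (U * S)) + C (1 / θ * 2 * u α) * (U * S)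
      + C (1 / θ * usq) * (X α * S) + C (1 / θ * usq * u α) * S
      - C (1 / θ * (dv / D)) * (Q * (Q * X α)) - C (1 / θ * (dv / D) * u α) * (Q * Q)
      - C (1 / θ * (dv / D) * 2) * (Q * (X α * U)) - C (1 / θ * (dv / D) * 2 * u α) * (Q * U)
      - C (1 / θ * (dv / D) * usq) * (Q * X α) - C (1 / θ * (dv / D) * usq * u α) * Q := by
    simp only [fluxPoly, cePoly, map_mul]
    ring
  have odd : ∀ (k : ℕ) (p : MvPolynomial (Fin D) ℝ), p.IsHomogeneous (2 * k + 1) → L p = 0 :=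
    fun k p hp => gaussMoment_odd hθ k hp
  have o1 := odd 2 _ (hQh.mul (hQh.mul hAh))
  have o2 := odd 2 _ (((hUh.mul hQh).mul hXh).mul hAh)
  have o3 := odd 1 _ (hQh.mul hAh)
  have o4 := odd 1 _ ((hUh.mul hXh).mul hAh)
  have o5 := odd 0 _ hAh
  have o6 := odd 2 _ ((hQh.mul hXh).mul hSh)
  have o7 := odd 1 _ (hXh.mul hSh)
  have o8 := odd 1 _ (hUh.mul hSh)
  have o9 := odd 2 _ (hQh.mul (hQh.mul hXh))
  have o10 := odd 1 _ (hQh.mul hUh)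
  have o11 := odd 1 _ (hQh.mul hXh)
  have e1 : L (X α * A) = θ * a α * L 1 := gaussMoment_X_mul_linPoly hθ α a
  have e2 : L (X α * U) = θ * u α * L 1 := gaussMoment_X_mul_linPoly hθ α u
  have e3 : L (Q * (X α * A)) = _ := gaussMoment_normSq_mul hθ (hXh.mul hAh)
  have e4 : L (Q * (Q * (X α * A))) = _ := gaussMoment_normSq_mul hθ (hQh.mul (hXh.mul hAh))
  have e5 : L (Q * (X α * U)) = _ := gaussMoment_normSq_mul hθ (hXh.mul hUh)
  have e6 : L (Q * (U * A)) = _ := gaussMoment_normSq_mul hθ (hUh.mul hAh)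
  have e7 : L (Q * S) = _ := gaussMoment_normSq_mul hθ hSh
  have e8 : L (Q * Q) = _ := gaussMoment_normSq_mul hθ hQh
  have e9 : L Q = θ * D * L 1 := gaussMoment_normSqPoly hθ
  have e10 : L S = θ * dv * L 1 := gaussMoment_quadPoly hθ B
  have e11 : L (X α * (U * S)) =
      θ ^ 2 * (u α * dv + ∑ j, u j * (B α j + B j α)) * L 1 :=
    gaussMoment_X_mul_linPoly_mul_quadPoly hθ α u B
  have e12 : L (U * A) = θ * (∑ i, u i * a i) * L 1 := gaussMoment_linPoly_mul_linPoly hθ u a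
  have hC : ∀ (r : ℝ) (p : MvPolynomial (Fin D) ℝ), L (C r * p) = r * L p :=
    gaussMoment_C_mul hθ
  rw [expand]
  simp only [map_add, map_sub, hC, o1, o2, o3, o4, o5, o6, o7, o8, o9, o10, o11]
  rw [e4, e3, e5, e6, e7, e8, e1, e2, e9, e10, e11, e12]
  have hD' : (D : ℝ) ≠ 0 := by positivity
  push_cast
  field_simp
  ring

/-! ### Logarithmic derivative of the Maxwellian and the Euler equations -/

/-- Logarithmic differentiation of the Maxwellian along a curve of states `(ρ, u, T)`. -/
lemma hasDerivAt_maxwellian {D : ℕ} {R₀ : ℝ} (hR₀ : 0 < R₀) {ρ T : ℝ → ℝ}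
    {u : ℝ → EuclideanSpace ℝ (Fin D)} {ρ' T' t : ℝ} {u' : EuclideanSpace ℝ (Fin D)}
    (hρ : HasDerivAt ρ ρ' t) (hu : HasDerivAt u u' t) (hT : HasDerivAt T T' t)
    (hρ0 : 0 < ρ t) (hT0 : 0 < T t) (ξ : EuclideanSpace ℝ (Fin D)) :
    HasDerivAt (fun s => maxwellian D (ρ s) R₀ (T s) (u s) ξ)
      (maxwellian D (ρ t) R₀ (T t) (u t) ξ *
        (ρ' / ρ t - D / 2 * T' / T t + (∑ j, (ξ - u t) j * u' j) / (R₀ * T t) +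
          ‖ξ - u t‖ ^ 2 * T' / (2 * R₀ * T t ^ 2))) t := by
  have hbase : 0 < 2 * π * R₀ * T t := by positivity
  have h1 := (hT.const_mul (2 * π * R₀)).rpow_const (p := (D : ℝ) / 2) (Or.inl hbase.ne')
  have hpow : (2 * π * R₀ * T t) ^ ((D : ℝ) / 2) ≠ 0 := (rpow_pos_of_pos hbase _).ne'
  have h2 := hρ.div h1 hpow
  have h3 := (((hu.const_sub ξ).norm_sq.neg).div (hT.const_mul (2 * R₀)) (by positivity)).exp
  have h4 := h2.mul h3
  have hfun : (fun s => maxwellian D (ρ s) R₀ (T s) (u s) ξ) =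
      (ρ / fun y => (2 * π * R₀ * T y) ^ ((D : ℝ) / 2)) * fun x =>
        exp (((-fun x => ‖ξ - u x‖ ^ 2) / fun y => 2 * R₀ * T y) x) := rfl
  rw [hfun]
  refine h4.congr_deriv ?_
  have hin : inner ℝ (ξ - u t) (-u') = -∑ j, (ξ - u t) j * u' j := by
    rw [inner_neg_right, PiLp.inner_apply]
    simp [mul_comm]
  simp only [hin, maxwellian, rpow_sub_one hbase.ne']
  simp only [Pi.neg_apply, Pi.div_apply]
  set P := (2 * π * R₀ * T t) ^ ((D : ℝ) / 2)
  set E := exp (-‖ξ - u t‖ ^ 2 / (2 * R₀ * T t))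
  field_simp
  ring

/-- The Euler equations in conservative form, with all derivatives expanded, yield the
time derivatives of `ρ`, `u` and `T`. Here `r i = ∂ᵢρ`, `a i = ∂ᵢT`,
`B i j = ∂ᵢuⱼ`, and `e` is the total energy per unit mass, whose value does not matter: by mass
conservation its terms cancel. -/
lemma euler_primitive {D : ℕ} (hD : 1 ≤ D) {R₀ ρ T ρt Tt : ℝ} (hR₀ : 0 < R₀) (hρ : 0 < ρ)
    {v ut r a : Fin D → ℝ} {B : Fin D → Fin D → ℝ} {e : ℝ}
    (mass : ρt + ∑ i, (r i * v i + ρ * B i i) = 0)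
    (mom : ∀ β, ρt * v β + ρ * ut β + ∑ i, ((r i * v i + ρ * B i i) * v β + ρ * v i * B i β +
      (if i = β then R₀ * (r i * T + ρ * a i) else 0)) = 0)
    (energy : ρt * e + ρ * (D * R₀ / 2 * Tt + ∑ j, v j * ut j) +
      ∑ i, ((r i * e + ρ * (D * R₀ / 2 * a i + ∑ j, v j * B i j) + R₀ * (r i * T + ρ * a i)) * v i
        + (ρ * e + ρ * R₀ * T) * B i i) = 0) :
    ρt = -(∑ i, v i * r i) - ρ * ∑ i, B i i ∧
    (∀ β, ut β = -(∑ i, v i * B i β) - R₀ * T * r β / ρ - R₀ * a β) ∧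
    Tt = -(∑ i, v i * a i) - 2 / D * T * ∑ i, B i i := by
  have hD' : (D : ℝ) ≠ 0 := by positivity
  have hm : ρt = -(∑ i, v i * r i) - ρ * ∑ i, B i i := by
    rw [Finset.sum_add_distrib, ← Finset.mul_sum] at mass
    simp only [mul_comm (r _)] at mass
    linarith
  have hu : ∀ β, ut β = -(∑ i, v i * B i β) - R₀ * T * r β / ρ - R₀ * a β := by
    intro β
    have h := mom β
    rw [Finset.sum_add_distrib, Finset.sum_add_distrib, ← Finset.sum_mul] at h
    simp only [mul_assoc ρ, ← Finset.mul_sum, Finset.sum_ite_eq', Finset.mem_univ, if_true] at h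
    field_simp
    linear_combination h - v β * mass
  refine ⟨hm, hu, ?_⟩
  have hvu : ∑ j, v j * ut j = -(∑ i, v i * ∑ j, v j * B i j)
      - R₀ * T / ρ * (∑ i, v i * r i) - R₀ * ∑ i, v i * a i := by
    have hswap : ∑ j, v j * ∑ i, v i * B i j = ∑ i, v i * ∑ j, v j * B i j := by
      simp only [Finset.mul_sum]
      rw [Finset.sum_comm]
      exact Finset.sum_congr rfl fun i _ => Finset.sum_congr rfl fun j _ => by ring
    rw [← hswap, Finset.mul_sum, Finset.mul_sum, ← Finset.sum_neg_distrib,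
      ← Finset.sum_sub_distrib, ← Finset.sum_sub_distrib]
    exact Finset.sum_congr rfl fun j _ => by rw [hu j]; ring
  have hflux : ∑ i, ((r i * e + ρ * (D * R₀ / 2 * a i + ∑ j, v j * B i j)
        + R₀ * (r i * T + ρ * a i)) * v i + (ρ * e + ρ * R₀ * T) * B i i) =
      (e + R₀ * T) * (∑ i, v i * r i) + (ρ * (D * R₀ / 2) + R₀ * ρ) * (∑ i, v i * a i)
      + ρ * (∑ i, v i * ∑ j, v j * B i j) + (ρ * e + ρ * R₀ * T) * ∑ i, B i i := by
    rw [Finset.mul_sum, Finset.mul_sum, Finset.mul_sum, Finset.mul_sum,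
      ← Finset.sum_add_distrib, ← Finset.sum_add_distrib, ← Finset.sum_add_distrib]
    exact Finset.sum_congr rfl fun i _ => by ring
  rw [hflux, hvu, hm] at energy
  have hk : ρ * R₀ * (D * Tt + D * (∑ i, v i * a i) + 2 * T * ∑ i, B i i) = 0 := by
    field_simp at energy
    linear_combination energy
  have hk2 := (mul_eq_zero.1 hk).resolve_left (by positivity)
  field_simp
  linear_combination hk2

lemma eval_normSqPoly {D : ℕ} (c : EuclideanSpace ℝ (Fin D)) :
    MvPolynomial.eval c.ofLp (normSqPoly D) = ‖c‖ ^ 2 := by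
  simp [normSqPoly, EuclideanSpace.real_norm_sq_eq]

lemma eval_linPoly {D : ℕ} (a : Fin D → ℝ) (c : EuclideanSpace ℝ (Fin D)) :
    MvPolynomial.eval c.ofLp (linPoly a) = ∑ i, a i * c i := by
  simp [linPoly]

lemma eval_quadPoly {D : ℕ} (B : Fin D → Fin D → ℝ) (c : EuclideanSpace ℝ (Fin D)) :
    MvPolynomial.eval c.ofLp (quadPoly B) = ∑ i, c i * ∑ j, c j * B i j := by
  simp only [quadPoly, map_sum, map_mul, MvPolynomial.eval_C, MvPolynomial.eval_X, Finset.mul_sum]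
  exact Finset.sum_congr rfl fun i _ => Finset.sum_congr rfl fun j _ => by ring

lemma eval_fluxPoly {D : ℕ} (u : EuclideanSpace ℝ (Fin D)) (α : Fin D)
    (c : EuclideanSpace ℝ (Fin D)) :
    MvPolynomial.eval c.ofLp (fluxPoly u.ofLp α) = ‖c + u‖ ^ 2 * (c + u) α := by
  simp only [fluxPoly, map_mul, map_add, eval_normSqPoly, eval_linPoly, MvPolynomial.eval_C,
    MvPolynomial.eval_X, PiLp.add_apply, EuclideanSpace.real_norm_sq_eq]
  congr 1
  rw [Finset.mul_sum, ← Finset.sum_add_distrib, ← Finset.sum_add_distrib]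
  exact Finset.sum_congr rfl fun i _ => by ring

/-- With the time derivatives eliminated, the logarithmic transport derivative
`(∂ₜ + ξ·∇) log f⁽ᵉᑫ⁾` at `ξ = c + v` is the value at `c` of `cePoly`. -/
lemma log_transport_eq {D : ℕ} (hD : 1 ≤ D) {R₀ ρ T ρt Tt : ℝ} (hR₀ : 0 < R₀) (hρ : 0 < ρ)
    (hT : 0 < T) {v ut r a : Fin D → ℝ} {B : Fin D → Fin D → ℝ}
    (hm : ρt = -(∑ i, v i * r i) - ρ * ∑ i, B i i)
    (hu : ∀ β, ut β = -(∑ i, v i * B i β) - R₀ * T * r β / ρ - R₀ * a β)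
    (he : Tt = -(∑ i, v i * a i) - 2 / D * T * ∑ i, B i i)
    (c : EuclideanSpace ℝ (Fin D)) :
    (ρt / ρ - D / 2 * Tt / T + (∑ j, c j * ut j) / (R₀ * T) + ‖c‖ ^ 2 * Tt / (2 * R₀ * T ^ 2)) +
      ∑ i, (c i + v i) * (r i / ρ - D / 2 * a i / T + (∑ j, c j * B i j) / (R₀ * T) +
        ‖c‖ ^ 2 * a i / (2 * R₀ * T ^ 2)) =
      MvPolynomial.eval c.ofLp (cePoly (R₀ * T) (fun i => a i / T) B) := by
  have hD' : (D : ℝ) ≠ 0 := by positivity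
  have hcu : ∑ j, c j * ut j = -(∑ i, v i * ∑ j, c j * B i j)
      - R₀ * T / ρ * (∑ i, c i * r i) - R₀ * ∑ i, c i * a i := by
    have hswap : ∑ j, c j * ∑ i, v i * B i j = ∑ i, v i * ∑ j, c j * B i j := by
      simp only [Finset.mul_sum]
      rw [Finset.sum_comm]
      exact Finset.sum_congr rfl fun i _ => Finset.sum_congr rfl fun j _ => by ring
    rw [← hswap, Finset.mul_sum, Finset.mul_sum, ← Finset.sum_neg_distrib,
      ← Finset.sum_sub_distrib, ← Finset.sum_sub_distrib]
    exact Finset.sum_congr rfl fun j _ => by rw [hu j]; ring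
  have hsum : ∑ i, (c i + v i) * (r i / ρ - D / 2 * a i / T + (∑ j, c j * B i j) / (R₀ * T) +
        ‖c‖ ^ 2 * a i / (2 * R₀ * T ^ 2)) =
      1 / ρ * (∑ i, c i * r i) + 1 / ρ * (∑ i, v i * r i)
      + (‖c‖ ^ 2 / (2 * R₀ * T ^ 2) - D / 2 / T) * (∑ i, c i * a i)
      + (‖c‖ ^ 2 / (2 * R₀ * T ^ 2) - D / 2 / T) * (∑ i, v i * a i)
      + 1 / (R₀ * T) * (∑ i, c i * ∑ j, c j * B i j)
      + 1 / (R₀ * T) * (∑ i, v i * ∑ j, c j * B i j) := by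
    simp only [Finset.mul_sum Finset.univ (fun i => c i * r i),
      Finset.mul_sum Finset.univ (fun i => v i * r i),
      Finset.mul_sum Finset.univ (fun i => c i * a i),
      Finset.mul_sum Finset.univ (fun i => v i * a i),
      Finset.mul_sum Finset.univ (fun i => c i * ∑ j, c j * B i j),
      Finset.mul_sum Finset.univ (fun i => v i * ∑ j, c j * B i j),
      ← Finset.sum_add_distrib]
    exact Finset.sum_congr rfl fun i _ => by ring
  have hlin : ∑ i, a i / T * c i = 1 / T * ∑ i, c i * a i := by
    rw [Finset.mul_sum]
    exact Finset.sum_congr rfl fun i _ => by ring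
  simp only [cePoly, map_add, map_mul, map_sub, MvPolynomial.eval_C, eval_normSqPoly, eval_linPoly,
    eval_quadPoly]
  rw [hsum, hcu, hlin, hm, he]
  field_simp
  ring

/-! ### The first-order correction -/

/-- A partial derivative is computed by differentiating along the coordinate line. -/
lemma fderiv_single_eq {D : ℕ} {f : EuclideanSpace ℝ (Fin D) → ℝ} {x : EuclideanSpace ℝ (Fin D)}
    {i : Fin D} {d : ℝ} (hf : DifferentiableAt ℝ f x)
    (h : HasDerivAt (fun s : ℝ => f (x + s • EuclideanSpace.single i (1 : ℝ))) d 0) :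
    fderiv ℝ f x (EuclideanSpace.single i 1) = d := by
  rw [← hf.lineDeriv_eq_fderiv]
  exact HasLineDerivAt.lineDeriv h

lemma HasDerivAt.euclidean_apply {D : ℕ} {u : ℝ → EuclideanSpace ℝ (Fin D)}
    {u' : EuclideanSpace ℝ (Fin D)} {t : ℝ} (hu : HasDerivAt u u' t) (j : Fin D) :
    HasDerivAt (fun s => u s j) (u' j) t :=
  (EuclideanSpace.proj j : EuclideanSpace ℝ (Fin D) →L[ℝ] ℝ).hasFDerivAt.comp_hasDerivAt t hu

/-- Derivative of the total energy density along a curve of states. -/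
lemma hasDerivAt_energy {D : ℕ} {k : ℝ} {ρ T : ℝ → ℝ}
    {u : ℝ → EuclideanSpace ℝ (Fin D)} {ρ' T' t : ℝ} {u' : EuclideanSpace ℝ (Fin D)}
    (hρ : HasDerivAt ρ ρ' t) (hu : HasDerivAt u u' t) (hT : HasDerivAt T T' t) :
    HasDerivAt (fun s => ρ s * (k * T s + ‖u s‖ ^ 2 / 2))
      (ρ' * (k * T t + ‖u t‖ ^ 2 / 2) + ρ t * (k * T' + ∑ j, u t j * u' j)) t := by
  have hin : inner ℝ (u t) u' = ∑ j, u t j * u' j := by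
    rw [PiLp.inner_apply]
    simp [mul_comm]
  refine (hρ.mul ((hT.const_mul k).add (hu.norm_sq.div_const 2))).congr_deriv ?_
  rw [hin]
  simp

/-- Under the Euler equations, `(∂ₜ + ξ·∇) f⁽ᵉᑫ⁾` at `ξ = c + u` is `f⁽ᵉᑫ⁾` times the value of
`cePoly` at the peculiar velocity `c`. -/
lemma transport_maxwellian_eq
    (D : ℕ) (hD : 1 ≤ D) (R₀ : ℝ) (hR₀ : 0 < R₀)
    (ρ : EuclideanSpace ℝ (Fin D) → ℝ → ℝ)
    (u : EuclideanSpace ℝ (Fin D) → ℝ → EuclideanSpace ℝ (Fin D))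
    (T : EuclideanSpace ℝ (Fin D) → ℝ → ℝ)
    (hρ_pos : ∀ x t, 0 < ρ x t) (hT_pos : ∀ x t, 0 < T x t)
    (hρd : Differentiable ℝ (fun p : EuclideanSpace ℝ (Fin D) × ℝ => ρ p.1 p.2))
    (hud : Differentiable ℝ (fun p : EuclideanSpace ℝ (Fin D) × ℝ => u p.1 p.2))
    (hTd : Differentiable ℝ (fun p : EuclideanSpace ℝ (Fin D) × ℝ => T p.1 p.2))
    (x : EuclideanSpace ℝ (Fin D)) (t : ℝ)
    (mass :
      deriv (fun s => ρ x s) t +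
        ∑ α : Fin D, fderiv ℝ (fun y => ρ y t * u y t α) x (EuclideanSpace.single α 1)
        = 0)
    (mom : ∀ β : Fin D,
      deriv (fun s => ρ x s * u x s β) t +
        ∑ α : Fin D, fderiv ℝ
          (fun y => ρ y t * u y t α * u y t β +
            (if α = β then ρ y t * R₀ * T y t else 0)) x (EuclideanSpace.single α 1)
        = 0)
    (energy :
      deriv (fun s => ρ x s * ((D * R₀ / 2) * T x s + ‖u x s‖ ^ 2 / 2)) t +
        ∑ α : Fin D, fderiv ℝ
          (fun y => (ρ y t * ((D * R₀ / 2) * T y t + ‖u y t‖ ^ 2 / 2) +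
            ρ y t * R₀ * T y t) * u y t α) x (EuclideanSpace.single α 1)
        = 0)
    (c : EuclideanSpace ℝ (Fin D)) :
    deriv (fun s => maxwellian D (ρ x s) R₀ (T x s) (u x s) (c + u x t)) t +
        ∑ α : Fin D, (c + u x t) α * fderiv ℝ
          (fun y => maxwellian D (ρ y t) R₀ (T y t) (u y t) (c + u x t)) x
          (EuclideanSpace.single α 1) =
      maxwellian D (ρ x t) R₀ (T x t) (u x t) (c + u x t) *
        MvPolynomial.eval c.ofLp (cePoly (R₀ * T x t)
          (fun i => fderiv ℝ (fun y => T y t) x (EuclideanSpace.single i 1) / T x t)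
          (fun i j => fderiv ℝ (fun y => u y t j) x (EuclideanSpace.single i 1))) := by
  have hρx : Differentiable ℝ (fun y => ρ y t) :=
    hρd.comp (differentiable_id.prodMk (differentiable_const t))
  have hux : Differentiable ℝ (fun y => u y t) :=
    hud.comp (differentiable_id.prodMk (differentiable_const t))
  have hTx : Differentiable ℝ (fun y => T y t) :=
    hTd.comp (differentiable_id.prodMk (differentiable_const t))
  have huxj : ∀ j, Differentiable ℝ (fun y => u y t j) := fun j =>
    (EuclideanSpace.proj j : EuclideanSpace ℝ (Fin D) →L[ℝ] ℝ).differentiable.comp hux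
  have hnx : Differentiable ℝ (fun y => ‖u y t‖ ^ 2) := hux.norm_sq ℝ
  have hρt : HasDerivAt (fun s => ρ x s) (deriv (fun s => ρ x s) t) t :=
    (hρd.comp ((differentiable_const x).prodMk differentiable_id) t).hasDerivAt
  have hut : HasDerivAt (fun s => u x s) (deriv (fun s => u x s) t) t :=
    (hud.comp ((differentiable_const x).prodMk differentiable_id) t).hasDerivAt
  have hTt : HasDerivAt (fun s => T x s) (deriv (fun s => T x s) t) t :=
    (hTd.comp ((differentiable_const x).prodMk differentiable_id) t).hasDerivAt
  set ρt := deriv (fun s => ρ x s) t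
  set ut := deriv (fun s => u x s) t
  set Tt := deriv (fun s => T x s) t
  set r : Fin D → ℝ := fun i => fderiv ℝ (fun y => ρ y t) x (EuclideanSpace.single i 1)
  set a : Fin D → ℝ := fun i => fderiv ℝ (fun y => T y t) x (EuclideanSpace.single i 1)
  set b : Fin D → EuclideanSpace ℝ (Fin D) :=
    fun i => fderiv ℝ (fun y => u y t) x (EuclideanSpace.single i 1)
  have x0 : ∀ i : Fin D, x + (0 : ℝ) • EuclideanSpace.single i (1 : ℝ) = x := fun i => by simp
  have cρ : ∀ i, HasDerivAt (fun s : ℝ => ρ (x + s • EuclideanSpace.single i (1 : ℝ)) t) (r i) 0 :=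
    fun i => (hρx x).hasFDerivAt.hasLineDerivAt _
  have cT : ∀ i, HasDerivAt (fun s : ℝ => T (x + s • EuclideanSpace.single i (1 : ℝ)) t) (a i) 0 :=
    fun i => (hTx x).hasFDerivAt.hasLineDerivAt _
  have cu : ∀ i, HasDerivAt (fun s : ℝ => u (x + s • EuclideanSpace.single i (1 : ℝ)) t) (b i) 0 :=
    fun i => (hux x).hasFDerivAt.hasLineDerivAt _
  have cuj : ∀ i j, HasDerivAt
      (fun s : ℝ => u (x + s • EuclideanSpace.single i (1 : ℝ)) t j) (b i j) 0 :=
    fun i j => (cu i).euclidean_apply j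
  have hB : (fun i j => fderiv ℝ (fun y => u y t j) x (EuclideanSpace.single i 1)) =
      fun i j => b i j := by
    funext i j
    exact fderiv_single_eq (huxj j x) (cuj i j)
  have fmass : ∀ i, fderiv ℝ (fun y => ρ y t * u y t i) x (EuclideanSpace.single i 1) =
      r i * u x t i + ρ x t * b i i := fun i => by
    refine fderiv_single_eq ((hρx.mul (huxj i)) x) ?_
    simpa only [x0] using! (cρ i).mul (cuj i i)
  have fmom : ∀ β i, fderiv ℝ (fun y => ρ y t * u y t i * u y t β +
            (if i = β then ρ y t * R₀ * T y t else 0)) x (EuclideanSpace.single i 1) =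
      (r i * u x t i + ρ x t * b i i) * u x t β + ρ x t * u x t i * b i β +
      (if i = β then R₀ * (r i * T x t + ρ x t * a i) else 0) := fun β i => by
    have h1 := ((cρ i).mul (cuj i i)).mul (cuj i β)
    by_cases h : i = β
    · simp only [h, if_true]
      subst h
      refine fderiv_single_eq
        ((((hρx.mul (huxj i)).mul (huxj i)).add ((hρx.mul_const R₀).mul hTx)) x) ?_
      refine (h1.add (((cρ i).mul_const R₀).mul (cT i))).congr_deriv ?_
      simp only [Pi.mul_apply, x0]
      ring
    · simp only [h, if_false, add_zero]
      refine fderiv_single_eq (((hρx.mul (huxj i)).mul (huxj β)) x) ?_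
      refine h1.congr_deriv ?_
      simp only [Pi.mul_apply, x0]
  have fen : ∀ i, fderiv ℝ (fun y => (ρ y t * ((D * R₀ / 2) * T y t + ‖u y t‖ ^ 2 / 2) +
            ρ y t * R₀ * T y t) * u y t i) x (EuclideanSpace.single i 1) =
      (r i * (D * R₀ / 2 * T x t + ‖u x t‖ ^ 2 / 2) +
        ρ x t * (D * R₀ / 2 * a i + ∑ j, u x t j * b i j) +
        R₀ * (r i * T x t + ρ x t * a i)) * u x t i +
      (ρ x t * (D * R₀ / 2 * T x t + ‖u x t‖ ^ 2 / 2) + ρ x t * R₀ * T x t) * b i i := fun i => by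
    have hn2 : Differentiable ℝ (fun y => ‖u y t‖ ^ 2 / 2) := by
      simpa only [div_eq_mul_inv] using! hnx.mul_const (2 : ℝ)⁻¹
    refine fderiv_single_eq ((((hρx.mul ((hTx.const_mul (D * R₀ / 2)).add
      hn2)).add ((hρx.mul_const R₀).mul hTx)).mul (huxj i)) x) ?_
    refine (((hasDerivAt_energy (k := D * R₀ / 2) (cρ i) (cu i) (cT i)).add
      (((cρ i).mul_const R₀).mul (cT i))).mul (cuj i i)).congr_deriv ?_
    simp only [Pi.mul_apply, Pi.add_apply, x0]
    ring
  have tmom : ∀ β, deriv (fun s => ρ x s * u x s β) t = ρt * u x t β + ρ x t * ut β :=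
    fun β => (hρt.mul (hut.euclidean_apply β)).deriv
  have ten := (hasDerivAt_energy (k := D * R₀ / 2) hρt hut hTt).deriv
  simp only [fmass] at mass
  simp only [fmom, tmom] at mom
  rw [ten] at energy
  simp only [fen] at energy
  obtain ⟨hm, hu, he⟩ := euler_primitive (v := fun i => u x t i) (ut := fun i => ut i)
    (B := fun i j => b i j) (r := r) (a := a) hD hR₀ (hρ_pos x t) mass mom energy
  have tM := (hasDerivAt_maxwellian hR₀ hρt hut hTt (hρ_pos x t) (hT_pos x t)
    (c + u x t)).deriv
  have hMd : DifferentiableAt ℝ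
      (fun y => maxwellian D (ρ y t) R₀ (T y t) (u y t) (c + u x t)) x := by
    have hbase : ∀ y, 2 * π * R₀ * T y t ≠ 0 := fun y => by
      have := hT_pos y t
      positivity
    have hbase2 : ∀ y, 2 * R₀ * T y t ≠ 0 := fun y => by
      have := hT_pos y t
      positivity
    have hpow : ∀ y, (2 * π * R₀ * T y t) ^ ((D : ℝ) / 2) ≠ 0 := fun y => by
      have := hT_pos y t
      exact (rpow_pos_of_pos (by positivity) _).ne'
    have d1 : DifferentiableAt ℝ (fun y => (2 * π * R₀ * T y t) ^ ((D : ℝ) / 2)) x :=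
      DifferentiableAt.rpow_const ((hTx x).const_mul (2 * π * R₀)) (Or.inl (hbase x))
    have d2 : DifferentiableAt ℝ (fun y => -‖c + u x t - u y t‖ ^ 2) x :=
      (((hux x).const_sub (c + u x t)).norm_sq ℝ).neg
    have d4 : DifferentiableAt ℝ (fun y => 2 * R₀ * T y t) x := (hTx x).const_mul (2 * R₀)
    have d5 : DifferentiableAt ℝ (fun y => -‖c + u x t - u y t‖ ^ 2 / (2 * R₀ * T y t)) x :=
      d2.fun_mul (d4.fun_inv (hbase2 x))
    have d3 : DifferentiableAt ℝ
        (fun y => exp (-‖c + u x t - u y t‖ ^ 2 / (2 * R₀ * T y t))) x :=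
      d5.exp
    exact ((hρx x).fun_mul (d1.fun_inv (hpow x))).fun_mul d3
  have fM := fun i : Fin D => fderiv_single_eq hMd
    (hasDerivAt_maxwellian hR₀ (cρ i) (cu i) (cT i) (hρ_pos _ t) (hT_pos _ t) (c + u x t))
  simp only [x0] at fM
  rw [tM, hB]
  simp only [fM, add_sub_cancel_right]
  rw [← log_transport_eq hD hR₀ (hρ_pos x t) (hT_pos x t) hm hu he c]
  rw [mul_add (maxwellian _ _ _ _ _ _) _ (∑ i, _), Finset.mul_sum]
  congr 1
  exact Finset.sum_congr rfl fun i _ => by rw [PiLp.add_apply]; ring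

/-- For `f⁽¹⁾ = −τ D₀ f⁽ᵉᑫ⁾` with `(ρ,u,T)` satisfying the Euler equations in
`t₀`, the first-order heat flux is
`Q⁽¹⁾_α = (1/2)∫ |ξ|² ξ_α f⁽¹⁾ dξ = −κ ∂_α T − u_β σ_{αβ}`, with
`κ = τp(D+2)R₀/2`, `σ_{αβ} = μ(∂_α u_β + ∂_β u_α − (2/D)(∇·u)δ_{αβ})`,
`μ = τp`, `p = ρR₀T`; in particular the Prandtl number `μ c_p/κ = 1` with
`c_p = (D+2)R₀/2`. -/
theorem chapman_enskog_first_order_heat_flux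
    (D : ℕ) (hD : 1 ≤ D) (R₀ τ : ℝ) (hR₀ : 0 < R₀) (hτ : 0 < τ)
    (ρ : EuclideanSpace ℝ (Fin D) → ℝ → ℝ)
    (u : EuclideanSpace ℝ (Fin D) → ℝ → EuclideanSpace ℝ (Fin D))
    (T : EuclideanSpace ℝ (Fin D) → ℝ → ℝ)
    (hρ_pos : ∀ x t, 0 < ρ x t) (hT_pos : ∀ x t, 0 < T x t)
    (hρ_smooth : ContDiff ℝ (⊤ : ℕ∞) (fun p : EuclideanSpace ℝ (Fin D) × ℝ => ρ p.1 p.2))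
    (hu_smooth : ContDiff ℝ (⊤ : ℕ∞) (fun p : EuclideanSpace ℝ (Fin D) × ℝ => u p.1 p.2))
    (hT_smooth : ContDiff ℝ (⊤ : ℕ∞) (fun p : EuclideanSpace ℝ (Fin D) × ℝ => T p.1 p.2))
    -- the Euler equations, used to eliminate the time derivatives
    (h_euler_mass : ∀ x t,
      deriv (fun s => ρ x s) t +
        ∑ α : Fin D, fderiv ℝ (fun y => ρ y t * u y t α) x (EuclideanSpace.single α 1)
        = 0)
    (h_euler_mom : ∀ x t, ∀ β : Fin D,
      deriv (fun s => ρ x s * u x s β) t +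
        ∑ α : Fin D, fderiv ℝ
          (fun y => ρ y t * u y t α * u y t β +
            (if α = β then ρ y t * R₀ * T y t else 0)) x (EuclideanSpace.single α 1)
        = 0)
    (h_euler_energy : ∀ x t,
      deriv (fun s => ρ x s * ((D * R₀ / 2) * T x s + ‖u x s‖ ^ 2 / 2)) t +
        ∑ α : Fin D, fderiv ℝ
          (fun y => (ρ y t * ((D * R₀ / 2) * T y t + ‖u y t‖ ^ 2 / 2) +
            ρ y t * R₀ * T y t) * u y t α) x (EuclideanSpace.single α 1)
        = 0)
    (f1 : EuclideanSpace ℝ (Fin D) → ℝ → EuclideanSpace ℝ (Fin D) → ℝ)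
    (hf1 : ∀ x t ξ, f1 x t ξ =
      -τ * (deriv (fun s => maxwellian D (ρ x s) R₀ (T x s) (u x s) ξ) t +
        ∑ α : Fin D, ξ α * fderiv ℝ
          (fun y => maxwellian D (ρ y t) R₀ (T y t) (u y t) ξ) x
          (EuclideanSpace.single α 1))) :
    (∀ x t, ∀ α : Fin D,
      (1 / 2) * (∫ ξ : EuclideanSpace ℝ (Fin D), ‖ξ‖ ^ 2 * ξ α * f1 x t ξ)
        = -(τ * (ρ x t * R₀ * T x t) * (D + 2) * R₀ / 2) *
            fderiv ℝ (fun y => T y t) x (EuclideanSpace.single α 1) -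
          ∑ β : Fin D, u x t β *
            ((τ * (ρ x t * R₀ * T x t)) *
              (fderiv ℝ (fun y => u y t β) x (EuclideanSpace.single α 1) +
               fderiv ℝ (fun y => u y t α) x (EuclideanSpace.single β 1) -
               (2 / D) * (∑ γ : Fin D,
                 fderiv ℝ (fun y => u y t γ) x (EuclideanSpace.single γ 1)) *
                 (if α = β then 1 else 0)))) ∧
    (∀ x t,
      (τ * (ρ x t * R₀ * T x t)) * ((D + 2) * R₀ / 2) /
        (τ * (ρ x t * R₀ * T x t) * (D + 2) * R₀ / 2) = 1) := by
  have hρd := hρ_smooth.differentiable (by simp)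
  have hud := hu_smooth.differentiable (by simp)
  have hTd := hT_smooth.differentiable (by simp)
  refine ⟨fun x t α => ?_, fun x t => ?_⟩
  · have hρ := hρ_pos x t
    have hT := hT_pos x t
    have hθ : 0 < R₀ * T x t := by positivity
    have hpt : ∀ c : EuclideanSpace ℝ (Fin D),
        ‖c + u x t‖ ^ 2 * (c + u x t) α * f1 x t (c + u x t) =
        -τ * (ρ x t / (2 * π * R₀ * T x t) ^ ((D : ℝ) / 2)) *
          (MvPolynomial.eval c.ofLp (fluxPoly (u x t).ofLp α * cePoly (R₀ * T x t)
            (fun i => fderiv ℝ (fun y => T y t) x (EuclideanSpace.single i 1) / T x t)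
            (fun i j => fderiv ℝ (fun y => u y t j) x (EuclideanSpace.single i 1))) *
          exp (-(1 / (2 * (R₀ * T x t))) * ‖c‖ ^ 2)) := by
      intro c
      have hexp : -‖c‖ ^ 2 / (2 * R₀ * T x t) = -(1 / (2 * (R₀ * T x t))) * ‖c‖ ^ 2 := by
        field_simp
      rw [hf1, transport_maxwellian_eq D hD R₀ hR₀ ρ u T hρ_pos hT_pos hρd hud hTd x t
        (h_euler_mass x t) (h_euler_mom x t) (h_euler_energy x t) c, map_mul, eval_fluxPoly,
        maxwellian, add_sub_cancel_right, hexp]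
      ring
    rw [← integral_add_right_eq_self _ (u x t)]
    simp only [hpt]
    rw [integral_const_mul]
    change 1 / 2 * (_ * gaussMoment D hθ _) = _
    rw [gaussMoment_fluxPoly_mul_cePoly hD, gaussMoment_one]
    have hpow : (2 * π * R₀ * T x t) ^ ((D : ℝ) / 2) ≠ 0 :=
      (rpow_pos_of_pos (by positivity) _).ne'
    rw [← mul_assoc (2 * π) R₀]
    have hsum : ∀ (w g h : Fin D → ℝ) (k m : ℝ),
        ∑ β, w β * (k * (g β + h β - m * (if α = β then 1 else 0))) =
          k * (∑ β, w β * (g β + h β) - m * w α) := by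
      intro w g h k m
      have h1 : ∀ β, w β * (k * (g β + h β - m * (if α = β then 1 else 0))) =
          k * (w β * (g β + h β)) - k * m * (if α = β then w β else 0) := fun β => by
        split_ifs <;> ring
      simp only [h1, Finset.sum_sub_distrib, ← Finset.mul_sum, Finset.sum_ite_eq,
        Finset.mem_univ, if_true]
      ring
    rw [hsum]
    field_simp
    ring
  · have hρ := hρ_pos x t
    have hT := hT_pos x t
    field_simp
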